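/- Let w = x^{a_1}y^{b_1}···x^{a_r}y^{b_r} be a reduced word of complexity r, and write a = a_1, b = b_1. Let F = ℚ, or F = F_p for a prime p with p > r/2 and p ≠ r. Suppose that over F the trace polynomial satisfies f_w(s,u,t) = D_r(q(s,u,t)) for some q ∈ F[s,u,t], and that w is trace-similar to (x^a y^b)^r. Then w = (x^a y^b)^r; that is, a_i = a and b_i = b for all i. -/

import Mathlib

open Matrix Polynomial

abbrev SL2 (K : Type) [CommRing K] : Type := Matrix.SpecialLinearGroup (Fin 2) K

abbrev PSL2 (K : Type) [CommRing K] : Type := SL2 K ⧸ Subgroup.center (SL2 K)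

/-- Evaluation of a word `w ∈ F₂` at a pair of group elements. -/
def wordEval {G : Type*} [Group G] (w : FreeGroup (Fin 2)) (g₁ g₂ : G) : G :=
  (FreeGroup.lift ![g₁, g₂]) w

/-- The word map `P_{w,G} : G × G → G` for `G = SL(2,K)`. -/
def wordMap (w : FreeGroup (Fin 2)) (K : Type) [CommRing K] :
    SL2 K × SL2 K → SL2 K := fun g => wordEval w g.1 g.2

/-- The point `(tr x, tr xy, tr y)`. -/
def trPoint {K : Type} [CommRing K] (x y : SL2 K) : Fin 3 → K :=
  ![Matrix.trace (x : Matrix (Fin 2) (Fin 2) K),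
    Matrix.trace ((x * y : SL2 K) : Matrix (Fin 2) (Fin 2) K),
    Matrix.trace (y : Matrix (Fin 2) (Fin 2) K)]

/-- `f ∈ ℤ[s,u,t]` is the trace polynomial of the word `w`. -/
def IsTracePolynomial (w : FreeGroup (Fin 2)) (f : MvPolynomial (Fin 3) ℤ) : Prop :=
  ∀ (K : Type) [CommRing K], ∀ x y : SL2 K,
    Matrix.trace ((wordEval w x y : SL2 K) : Matrix (Fin 2) (Fin 2) K) =
      MvPolynomial.eval (trPoint x y) (MvPolynomial.map (Int.castRingHom K) f)

/-- `f : X → Y` is `ε`-equidistributed. -/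
def IsEquidistributed {X Y : Type*} (f : X → Y) (ε : ℝ) : Prop :=
  ∃ Y' : Set Y,
    (1 - ε) * (Nat.card Y) < (Nat.card Y' : ℝ) ∧
    ∀ y ∈ Y',
      |(Nat.card {x : X // f x = y} : ℝ) - (Nat.card X : ℝ) / (Nat.card Y)| <
        ε * (Nat.card X) / (Nat.card Y)

/-- The family of word maps on `SL(2,p^n)` is `p`-equidistributed. -/
def IsPEquidistributed (w : FreeGroup (Fin 2)) (p : ℕ) (hp : p.Prime) : Prop :=
  letI : Fact p.Prime := ⟨hp⟩
  ∃ ε : ℕ → ℝ,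
    Filter.Tendsto (fun n : ℕ => ε (p ^ n)) Filter.atTop (nhds 0) ∧
    ∀ᶠ n : ℕ in Filter.atTop,
      IsEquidistributed (wordMap w (GaloisField p n)) (ε (p ^ n))

/-- The family of word maps on `SL(2,q)`, `q` ranging over all prime powers,
is equidistributed. -/
def IsEquidistributedFamily (w : FreeGroup (Fin 2)) : Prop :=
  ∃ ε : ℕ → ℝ,
    Filter.Tendsto ε Filter.atTop (nhds 0) ∧
    ∀ (p : ℕ) (hp : p.Prime),
      letI : Fact p.Prime := ⟨hp⟩
      ∀ᶠ n : ℕ in Filter.atTop,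
        IsEquidistributed (wordMap w (GaloisField p n)) (ε (p ^ n))

/-- Reduction of an integral polynomial mod `p`. -/
noncomputable def reduceMod (p : ℕ) (P : MvPolynomial (Fin 3) ℤ) : MvPolynomial (Fin 3) (ZMod p) :=
  MvPolynomial.map (Int.castRingHom (ZMod p)) P

/-- `P = h ∘ Q` with `deg Q ≥ 1`, `deg h ≥ 2`. -/
def IsCompositePoly (F : Type) [CommRing F] (P : MvPolynomial (Fin 3) F) : Prop :=
  ∃ (Q : MvPolynomial (Fin 3) F) (h : Polynomial F),
    1 ≤ Q.totalDegree ∧ 2 ≤ h.natDegree ∧ P = Polynomial.aeval Q h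

def IsPComposite (p : ℕ) (P : MvPolynomial (Fin 3) ℤ) : Prop :=
  IsCompositePoly (ZMod p) (reduceMod p P)

/-- `h` is a permutation polynomial of every finite extension of `F_p`. -/
def IsPermAllExt (p : ℕ) (h : Polynomial (ZMod p)) : Prop :=
  ∀ (K : Type) [Field K] [Algebra (ZMod p) K] [Finite K],
    Function.Bijective fun z : K => Polynomial.aeval z h

def IsPSpecial (p : ℕ) (P : MvPolynomial (Fin 3) ℤ) : Prop :=
  IsPComposite p P ∧
    ∃ (Q : MvPolynomial (Fin 3) (ZMod p)) (h : Polynomial (ZMod p)),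
      1 ≤ Q.totalDegree ∧ 2 ≤ h.natDegree ∧
      reduceMod p P = Polynomial.aeval Q h ∧ IsPermAllExt p h

def AlmostNoncomposite (P : MvPolynomial (Fin 3) ℤ) : Prop :=
  ∀ p : ℕ, p.Prime → ¬ IsPComposite p P ∨ IsPSpecial p P

/-- The reduced word `x^{a₁}y^{b₁} ⋯ x^{a_r}y^{b_r}`. -/
def wordOf {r : ℕ} (a b : Fin r → ℤ) : FreeGroup (Fin 2) :=
  (List.ofFn fun i : Fin r =>
    FreeGroup.of (0 : Fin 2) ^ a i * FreeGroup.of (1 : Fin 2) ^ b i).prod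

/-!
Suppose `f_w = h(q)` with `deg h = r`. Over a field with a valuation `v` trivial on `F` and an
element `p` with `v p > 1`, evaluate the trace of `w` at a diagonalizable pair `x`, `y`, both with
eigenvalues `p`, `p⁻¹`, where one eigenvector of `x` depends linearly on a parameter `X`. The trace
is a polynomial of degree at most `r` in `X` whose coefficient of `X ^ r` has valuation
`v p ^ (∑ |aᵢ| + ∑ |bᵢ|)`. It is also `h` of a polynomial, which is therefore linear, so one of its
values at `X = 0` and `X = 1` is at least as large as its slope, and `h` of that value is at least
as large as the coefficient of `X ^ r`. But for these two parameters `x` and `y` have a common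
eigenvector, so both values of the trace have valuation at most `v p ^ (|∑ aᵢ| + |∑ bᵢ|)`.
Hence all `aᵢ` have the same sign, and so do all `bᵢ`.
-/

lemma prod_zpow_eq_zpow_sum {ι A : Type*} [CommGroup A] (s : Finset ι) (g : A) (c : ι → ℤ) :
    ∏ i ∈ s, g ^ c i = g ^ ∑ i ∈ s, c i :=
  (map_prod (zpowersHom A g) (fun i => Multiplicative.ofAdd (c i)) s).symm

section Words

variable {G H : Type*} [Group G] [Group H]

lemma wordEval_wordOf {r : ℕ} (a b : Fin r → ℤ) (g h : G) :
    wordEval (wordOf a b) g h = (List.ofFn fun i => g ^ a i * h ^ b i).prod := by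
  rw [wordEval, wordOf, map_list_prod, List.map_ofFn]
  congr 2
  ext i
  simp

lemma wordEval_wordOf_of_comm {A : Type*} [CommGroup A] {r : ℕ} (a b : Fin r → ℤ) (g h : A) :
    wordEval (wordOf a b) g h = g ^ (∑ i, a i) * h ^ (∑ i, b i) := by
  rw [wordEval_wordOf, List.prod_ofFn, Finset.prod_mul_distrib, prod_zpow_eq_zpow_sum,
    prod_zpow_eq_zpow_sum]

lemma map_wordEval (φ : G →* H) (w : FreeGroup (Fin 2)) (g h : G) :
    φ (wordEval w g h) = wordEval w (φ g) (φ h) := by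
  have hom_eq : φ.comp (FreeGroup.lift ![g, h]) = FreeGroup.lift ![φ g, φ h] := by
    ext i
    fin_cases i <;> simp
  exact DFunLike.congr_fun hom_eq w

end Words

lemma mul_trace_eq_sq_add_det {R : Type*} [CommRing R] [IsDomain R] {M : Matrix (Fin 2) (Fin 2) R}
    {u : Fin 2 → R} (hu : u ≠ 0) {c : R} (h : M *ᵥ u = c • u) :
    c * M.trace = c ^ 2 + M.det := by
  have hdet : (M - c • 1).det = 0 :=
    Matrix.exists_mulVec_eq_zero_iff.1
      ⟨u, hu, by rw [Matrix.sub_mulVec, h, Matrix.smul_mulVec, Matrix.one_mulVec, sub_self]⟩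
  simp only [Matrix.det_fin_two, Matrix.sub_apply, Matrix.smul_apply, Matrix.one_apply,
    smul_eq_mul, Fin.isValue, zero_ne_one, one_ne_zero, if_true, if_false] at hdet
  rw [Matrix.trace_fin_two, Matrix.det_fin_two]
  linear_combination -hdet

lemma wordEval_mulVec {n R : Type*} [Fintype n] [DecidableEq n] [CommRing R]
    {x y : Matrix.SpecialLinearGroup n R} {u : n → R} {p q : Rˣ}
    (hx : x.1 *ᵥ u = p • u) (hy : y.1 *ᵥ u = q • u) (w : FreeGroup (Fin 2)) :
    (wordEval w x y).1 *ᵥ u = wordEval w p q • u := by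
  induction w using FreeGroup.induction_on with
  | C1 => simp [wordEval]
  | of i => fin_cases i <;> simpa [wordEval]
  | inv_of i ih =>
    rw [wordEval, wordEval, map_inv, map_inv, ← wordEval, ← wordEval, eq_inv_smul_iff,
      ← Matrix.mulVec_smul, ← ih, Matrix.mulVec_mulVec, ← Matrix.SpecialLinearGroup.coe_mul,
      inv_mul_cancel, Matrix.SpecialLinearGroup.coe_one, Matrix.one_mulVec]
  | mul v w hv hw =>
    simp only [wordEval, map_mul, Matrix.SpecialLinearGroup.coe_mul] at hv hw ⊢
    rw [← Matrix.mulVec_mulVec, hw, Matrix.mulVec_smul, hv, smul_smul, mul_comm]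

lemma trace_wordEval_of_common_eigenvector {R : Type*} [CommRing R] [IsDomain R]
    {x y : Matrix.SpecialLinearGroup (Fin 2) R} {u : Fin 2 → R} (hu : u ≠ 0) {p q : Rˣ}
    (hx : x.1 *ᵥ u = p • u) (hy : y.1 *ᵥ u = q • u) (w : FreeGroup (Fin 2)) :
    (wordEval w x y).1.trace = wordEval w p q + ((wordEval w p q)⁻¹ : Rˣ) := by
  have h := mul_trace_eq_sq_add_det hu (wordEval_mulVec hx hy w)
  rw [(wordEval w x y).2] at h
  apply mul_left_cancel₀ (wordEval w p q).ne_zero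
  rw [h, mul_add, Units.mul_inv, sq]

section LeadingCoefficient

variable {n R : Type*} [Fintype n] [DecidableEq n] [CommRing R]

lemma coeff_trace_prod (l : List (Matrix n n R[X])) (k : ℕ) :
    l.prod.trace.coeff k = ((l.map matPolyEquiv).prod.coeff k).trace := by
  rw [← map_list_prod]
  simp [Matrix.trace, matPolyEquiv_coeff_apply]

lemma natDegree_matPolyEquiv_le {M : Matrix n n R[X]} {d : ℕ} (hM : ∀ i j, (M i j).natDegree ≤ d) :
    (matPolyEquiv M).natDegree ≤ d := by
  rw [natDegree_le_iff_coeff_eq_zero]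
  intro k hk
  ext i j
  rw [matPolyEquiv_coeff_apply, coeff_eq_zero_of_natDegree_lt ((hM i j).trans_lt hk),
    Matrix.zero_apply]

lemma natDegree_trace_prod_le {l : List (Matrix n n R[X])} {d : ℕ}
    (hl : ∀ M ∈ l, ∀ i j, (M i j).natDegree ≤ d) :
    l.prod.trace.natDegree ≤ l.length * d := by
  rw [natDegree_le_iff_coeff_eq_zero]
  intro k hk
  have hdeg : (l.map matPolyEquiv).prod.natDegree ≤ l.length * d := by
    refine (natDegree_list_prod_le _).trans ?_
    simpa using List.sum_le_card_nsmul ((l.map matPolyEquiv).map natDegree) d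
      (by simpa using fun M hM => natDegree_matPolyEquiv_le (hl M hM))
  rw [coeff_trace_prod, coeff_eq_zero_of_natDegree_lt (hdeg.trans_lt hk), Matrix.trace_zero]

lemma coeff_trace_prod_of_natDegree_le {l : List (Matrix n n R[X])} {d : ℕ}
    (hl : ∀ M ∈ l, ∀ i j, (M i j).natDegree ≤ d) :
    l.prod.trace.coeff (l.length * d) =
      (l.map fun M : Matrix n n R[X] => M.map (coeff · d)).prod.trace := by
  have hprod := coeff_list_prod_of_natDegree_le (l.map matPolyEquiv) d
    (by simpa using fun M hM => natDegree_matPolyEquiv_le (hl M hM))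
  rw [List.length_map] at hprod
  rw [coeff_trace_prod, hprod, List.map_map]
  congr! 3
  ext M i j
  exact matPolyEquiv_coeff_apply M d i j

lemma trace_prod_ofFn_of_row_one_eq_zero {m : ℕ} (s t : Fin (m + 1) → R) :
    (List.ofFn fun i => !![s i, t i; 0, 0]).prod.trace = ∏ i, s i := by
  suffices ∃ c, (List.ofFn fun i => !![s i, t i; 0, 0]).prod = !![∏ i, s i, c; 0, 0] by
    obtain ⟨c, hc⟩ := this
    rw [hc, Matrix.trace_fin_two_of, add_zero]
  induction m with
  | zero => exact ⟨t 0, by simp⟩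
  | succ m ih =>
    obtain ⟨c, hc⟩ := ih (fun i => s i.succ) (fun i => t i.succ)
    refine ⟨s 0 * c, ?_⟩
    rw [List.ofFn_succ, List.prod_cons, hc, Matrix.mul_fin_two, Fin.prod_univ_succ s]
    simp only [mul_zero, zero_mul, add_zero]

end LeadingCoefficient

section Tori

variable {R S : Type*} [CommRing R] [CommRing S]

/-- The split torus of `SL₂(R)` whose element at `p` has eigenvector `(1, 0)` for `p` and `(t, 1)`
for `p⁻¹`. -/
def upperTorus (t : R) : Rˣ →* Matrix.SpecialLinearGroup (Fin 2) R where
  toFun p := ⟨!![(p : R), (↑p⁻¹ - p) * t; 0, ↑p⁻¹], by simp⟩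
  map_one' := by
    ext i j
    fin_cases i <;> fin_cases j <;> simp
  map_mul' p q := Subtype.ext <| Eq.trans
    (by ext i j; fin_cases i <;> fin_cases j <;> simp [mul_comm]; ring)
    (Matrix.mul_fin_two _ _ _ _ _ _ _ _).symm

/-- The split torus of `SL₂(R)` whose element at `p` has eigenvector `(1, 1)` for `p` and `(0, 1)`
for `p⁻¹`. -/
def lowerTorus : Rˣ →* Matrix.SpecialLinearGroup (Fin 2) R where
  toFun p := ⟨!![(p : R), 0; p - ↑p⁻¹, ↑p⁻¹], by simp⟩
  map_one' := by
    ext i j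
    fin_cases i <;> fin_cases j <;> simp
  map_mul' p q := Subtype.ext <| Eq.trans
    (by ext i j; fin_cases i <;> fin_cases j <;> simp [mul_comm]; ring)
    (Matrix.mul_fin_two _ _ _ _ _ _ _ _).symm

lemma coe_upperTorus (t : R) (p : Rˣ) :
    (upperTorus t p).1 = !![(p : R), (↑p⁻¹ - p) * t; 0, ↑p⁻¹] := rfl

lemma coe_lowerTorus (p : Rˣ) : (lowerTorus p).1 = !![(p : R), 0; p - ↑p⁻¹, ↑p⁻¹] := rfl

lemma map_upperTorus (φ : R →+* S) (t : R) (p : Rˣ) :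
    Matrix.SpecialLinearGroup.map φ (upperTorus t p) =
      upperTorus (φ t) (Units.map (φ : R →* S) p) := by
  ext i j
  fin_cases i <;> fin_cases j <;> simp [coe_upperTorus, ← map_inv]

lemma map_lowerTorus (φ : R →+* S) (p : Rˣ) :
    Matrix.SpecialLinearGroup.map φ (lowerTorus p) = lowerTorus (Units.map (φ : R →* S) p) := by
  ext i j
  fin_cases i <;> fin_cases j <;> simp [coe_lowerTorus, ← map_inv]

lemma upperTorus_mulVec (t : R) (p : Rˣ) : (upperTorus t p).1 *ᵥ ![t, 1] = p⁻¹ • ![t, 1] := by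
  ext i
  fin_cases i <;> simp [coe_upperTorus, Units.smul_def, sub_mul, mul_comm t]

lemma lowerTorus_mulVec_zero_one (p : Rˣ) :
    (lowerTorus p).1 *ᵥ ![0, 1] = p⁻¹ • ![0, 1] := by
  ext i
  fin_cases i <;> simp [coe_lowerTorus, Units.smul_def]

lemma lowerTorus_mulVec_one_one (p : Rˣ) : (lowerTorus p).1 *ᵥ ![1, 1] = p • ![1, 1] := by
  ext i
  fin_cases i <;> simp [coe_lowerTorus, Units.smul_def]

end Tori

section TorusTrace

variable {K : Type*} [Field K]

/-- The trace of `w` at elements of two tori of `SL₂(K[X])` sharing the eigenvalue `p`, as a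
polynomial in the parameter of the first torus. At `X = 0` and `X = 1` the tori have a common
eigenvector. -/
noncomputable def torusTrace (w : FreeGroup (Fin 2)) (p : Kˣ) : K[X] :=
  (wordEval w (upperTorus X (Units.map C.toMonoidHom p))
    (lowerTorus (Units.map C.toMonoidHom p))).1.trace

lemma eval_torusTrace (w : FreeGroup (Fin 2)) (p : Kˣ) (t : K) :
    (torusTrace w p).eval t = (wordEval w (upperTorus t p) (lowerTorus p)).1.trace := by
  have eval_units : Units.map (evalRingHom t : K[X] →* K) (Units.map C.toMonoidHom p) = p := by
    ext
    simp
  have eval_word := map_wordEval (Matrix.SpecialLinearGroup.map (evalRingHom t)) w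
    (upperTorus X (Units.map C.toMonoidHom p)) (lowerTorus (Units.map C.toMonoidHom p))
  rw [map_upperTorus, map_lowerTorus, eval_units, coe_evalRingHom, eval_X] at eval_word
  rw [← eval_word, torusTrace, ← coe_evalRingHom, AddMonoidHom.map_trace]
  rfl

lemma eval_zero_torusTrace_wordOf {r : ℕ} (a b : Fin r → ℤ) (p : Kˣ) :
    (torusTrace (wordOf a b) p).eval 0 =
      (p : K) ^ (∑ i, a i + ∑ i, b i) + (p : K) ^ (-(∑ i, a i + ∑ i, b i)) := by
  rw [eval_torusTrace, trace_wordEval_of_common_eigenvector (u := ![0, 1]) (by simp)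
    (upperTorus_mulVec 0 p) (lowerTorus_mulVec_zero_one p), wordEval_wordOf_of_comm]
  rw [← _root_.zpow_add, _root_.inv_zpow', ← _root_.zpow_neg, neg_neg]
  simp [add_comm]

lemma eval_one_torusTrace_wordOf {r : ℕ} (a b : Fin r → ℤ) (p : Kˣ) :
    (torusTrace (wordOf a b) p).eval 1 =
      (p : K) ^ (∑ i, a i - ∑ i, b i) + (p : K) ^ (-(∑ i, a i - ∑ i, b i)) := by
  rw [eval_torusTrace, trace_wordEval_of_common_eigenvector (u := ![1, 1]) (by simp)
    (upperTorus_mulVec 1 p) (lowerTorus_mulVec_one_one p), wordEval_wordOf_of_comm]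
  rw [_root_.inv_zpow', ← _root_.zpow_add, ← _root_.zpow_neg]
  simp [sub_eq_add_neg, add_comm]

lemma upperTorus_X_mul_lowerTorus (p q : Kˣ) :
    (upperTorus (X : K[X]) (Units.map C.toMonoidHom p) * lowerTorus (Units.map C.toMonoidHom q)).1 =
      !![C ((p : K) * q) + C (((p : K)⁻¹ - p) * (q - (q : K)⁻¹)) * X,
          C (((p : K)⁻¹ - p) * (q : K)⁻¹) * X;
        C ((p : K)⁻¹ * (q - (q : K)⁻¹)), C ((p : K)⁻¹ * (q : K)⁻¹)] := by
  rw [Matrix.SpecialLinearGroup.coe_mul, coe_upperTorus, coe_lowerTorus, Matrix.mul_fin_two]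
  ext1 i j
  fin_cases i <;> fin_cases j <;> simp [← map_inv, mul_right_comm]

lemma natDegree_upperTorus_X_mul_lowerTorus_le (p q : Kˣ) (i j : Fin 2) :
    ((upperTorus (X : K[X]) (Units.map C.toMonoidHom p) *
      lowerTorus (Units.map C.toMonoidHom q)).1 i j).natDegree ≤ 1 := by
  rw [upperTorus_X_mul_lowerTorus]
  fin_cases i <;> fin_cases j <;> simp only [Fin.zero_eta, Fin.mk_one, Matrix.of_apply,
    Matrix.cons_val', Matrix.cons_val_zero, Matrix.cons_val_one, Matrix.cons_val_fin_one] <;>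
    compute_degree!

lemma coeff_one_upperTorus_X_mul_lowerTorus (p q : Kˣ) :
    (upperTorus (X : K[X]) (Units.map C.toMonoidHom p) *
      lowerTorus (Units.map C.toMonoidHom q)).1.map (coeff · 1) =
      !![((p : K)⁻¹ - p) * (q - (q : K)⁻¹), ((p : K)⁻¹ - p) * (q : K)⁻¹; 0, 0] := by
  rw [upperTorus_X_mul_lowerTorus]
  ext i j
  fin_cases i <;> fin_cases j <;> simp [-map_mul, -map_sub, -map_inv₀, coeff_C]

lemma torusTrace_wordOf {r : ℕ} (a b : Fin r → ℤ) (p : Kˣ) :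
    torusTrace (wordOf a b) p = (List.ofFn fun i =>
      (upperTorus (X : K[X]) (Units.map C.toMonoidHom (p ^ a i)) *
        lowerTorus (Units.map C.toMonoidHom (p ^ b i))).1).prod.trace := by
  rw [torusTrace, wordEval_wordOf]
  simp only [← map_zpow]
  rw [← Matrix.SpecialLinearGroup.coeMonoidHom_apply, map_list_prod, List.map_ofFn]
  rfl

lemma natDegree_torusTrace_wordOf_le {r : ℕ} (a b : Fin r → ℤ) (p : Kˣ) :
    (torusTrace (wordOf a b) p).natDegree ≤ r := by
  rw [torusTrace_wordOf]
  refine (natDegree_trace_prod_le (d := 1) ?_).trans_eq (by simp)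
  rw [List.forall_mem_ofFn_iff]
  exact fun i => natDegree_upperTorus_X_mul_lowerTorus_le _ _

lemma coeff_torusTrace_wordOf {r : ℕ} (hr : 0 < r) (a b : Fin r → ℤ) (p : Kˣ) :
    (torusTrace (wordOf a b) p).coeff r =
      ∏ i, ((p : K) ^ (-a i) - p ^ a i) * ((p : K) ^ b i - p ^ (-b i)) := by
  obtain ⟨n, rfl⟩ := Nat.exists_eq_succ_of_ne_zero hr.ne'
  have coeff_eq := coeff_trace_prod_of_natDegree_le (d := 1) (List.forall_mem_ofFn_iff.2 fun i =>
    natDegree_upperTorus_X_mul_lowerTorus_le (p ^ a i) (p ^ b i))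
  rw [List.length_ofFn, mul_one, List.map_ofFn] at coeff_eq
  rw [torusTrace_wordOf, coeff_eq]
  simp only [Function.comp_def, coeff_one_upperTorus_X_mul_lowerTorus]
  rw [trace_prod_ofFn_of_row_one_eq_zero]
  simp

end TorusTrace

section Valuation

variable {F K Γ : Type*} [Field F] [Field K] [Algebra F K] [LinearOrderedCommGroupWithZero Γ]
  (v : Valuation K Γ)

lemma valuation_zpow_add_zpow_neg_le {p : K} (hp : 1 < v p) (k : ℤ) :
    v (p ^ k + p ^ (-k)) ≤ v p ^ |k| := by
  refine (v.map_add _ _).trans (max_le ?_ ?_) <;> rw [map_zpow₀]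
  · exact zpow_le_zpow_right₀ hp.le (le_abs_self k)
  · exact zpow_le_zpow_right₀ hp.le (neg_le_abs k)

lemma valuation_zpow_sub_zpow_neg {p : K} (hp : 1 < v p) {k : ℤ} (hk : k ≠ 0) :
    v (p ^ k - p ^ (-k)) = v p ^ |k| := by
  rcases hk.lt_or_gt with hneg | hpos
  · rw [v.map_sub_eq_of_lt_right, map_zpow₀, abs_of_neg hneg]
    simpa only [map_zpow₀] using zpow_lt_zpow_right₀ hp (by omega)
  · rw [v.map_sub_eq_of_lt_left, map_zpow₀, abs_of_pos hpos]
    simpa only [map_zpow₀] using zpow_lt_zpow_right₀ hp (by omega)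

lemma valuation_coeff_torusTrace_wordOf {p : Kˣ} (hp : 1 < v p) {r : ℕ} (hr : 0 < r)
    {a b : Fin r → ℤ} (hab : ∀ i, a i ≠ 0 ∧ b i ≠ 0) :
    v ((torusTrace (wordOf a b) p).coeff r) = v p ^ (∑ i, |a i| + ∑ i, |b i|) := by
  lift v p to Γˣ using (zero_lt_one.trans hp).ne'.isUnit with g hg
  have valuation_factor (i : Fin r) :
      v (((p : K) ^ (-a i) - p ^ a i) * (p ^ b i - p ^ (-b i))) = (g : Γ) ^ (|a i| + |b i|) := by
    rw [map_mul, v.map_sub_swap, valuation_zpow_sub_zpow_neg v (hg ▸ hp) (hab i).1,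
      valuation_zpow_sub_zpow_neg v (hg ▸ hp) (hab i).2, ← hg, zpow_add₀ g.ne_zero]
  rw [coeff_torusTrace_wordOf hr, map_prod, Finset.prod_congr rfl fun i _ => valuation_factor i,
    ← Finset.sum_add_distrib]
  exact_mod_cast prod_zpow_eq_zpow_sum .univ g fun i => |a i| + |b i|

lemma aeval_eq_comp_map {A B : Type*} [CommSemiring A] [CommSemiring B] [Algebra A B] (Q : B[X])
    (h : A[X]) : aeval Q h = (h.map (algebraMap A B)).comp Q := by
  rw [Polynomial.comp, eval₂_map, aeval_def]
  rfl

lemma natDegree_eq_one_of_coeff_aeval_ne_zero {Q : K[X]} {h : F[X]} (hh : 0 < h.natDegree)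
    (hdeg : (aeval Q h).natDegree ≤ h.natDegree) (hcoeff : (aeval Q h).coeff h.natDegree ≠ 0) :
    Q.natDegree = 1 := by
  have natDegree_aeval := hdeg.antisymm (le_natDegree_of_ne_zero hcoeff)
  rw [aeval_eq_comp_map, natDegree_comp, natDegree_map] at natDegree_aeval
  exact (Nat.mul_eq_left hh.ne').1 natDegree_aeval

lemma valuation_coeff_le_max_of_aeval [v.IsTrivialOn F] {Q : K[X]} {h : F[X]}
    (hh : 0 < h.natDegree) (hdeg : (aeval Q h).natDegree ≤ h.natDegree)
    (hcoeff : 1 < v ((aeval Q h).coeff h.natDegree)) :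
    v ((aeval Q h).coeff h.natDegree) ≤
      max (v ((aeval Q h).eval 0)) (v ((aeval Q h).eval 1)) := by
  set r := h.natDegree
  have natDegree_Q : Q.natDegree = 1 :=
    natDegree_eq_one_of_coeff_aeval_ne_zero hh hdeg (v.ne_zero_iff.1 (zero_lt_one.trans hcoeff).ne')
  have valuation_coeff : v ((aeval Q h).coeff r) = v (Q.coeff 1) ^ r := by
    have hlead := coeff_comp_degree_mul_degree (p := h.map (algebraMap F K))
      (natDegree_Q ▸ one_ne_zero)
    rw [← aeval_eq_comp_map, natDegree_map, leadingCoeff_map, natDegree_Q, mul_one] at hlead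
    rw [hlead, map_mul, map_pow, Valuation.IsTrivialOn.eq_one (v := v) _
      (leadingCoeff_ne_zero.2 (ne_zero_of_natDegree_gt hh)), one_mul, leadingCoeff, natDegree_Q]
  have one_lt_slope : 1 < v (Q.coeff 1) :=
    (one_lt_pow_iff hh.ne').1 (valuation_coeff ▸ hcoeff)
  have valuation_eval {t : K} (ht : v (Q.coeff 1) ≤ v (Q.eval t)) :
      v ((aeval Q h).coeff r) ≤ v ((aeval Q h).eval t) := by
    rw [valuation_coeff, aeval_eq_comp_map, eval_comp, eval_map_algebraMap,
      valuation_aeval_eq_valuation_X_pow_natDegree_of_one_lt_valuation_X _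
        (one_lt_slope.trans_le ht) (ne_zero_of_natDegree_gt hh)]
    exact pow_le_pow_left' ht _
  have slope_eq : Q.coeff 1 = Q.eval 1 - Q.eval 0 := by
    obtain ⟨c, d, rfl⟩ := exists_eq_X_add_C_of_natDegree_le_one natDegree_Q.le
    simp
  rcases le_max_iff.1 (slope_eq ▸ v.map_sub _ _) with h1 | h0
  · exact le_max_of_le_right (valuation_eval h1)
  · exact le_max_of_le_left (valuation_eval h0)

end Valuation

section Exponents

lemma apply_eq_of_coe_ofFn_eq_replicate {α : Type*} {n m : ℕ} {f : Fin n → α} {x : α}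
    (h : (↑(List.ofFn f) : Multiset α) = Multiset.replicate m x) (i : Fin n) : f i = x :=
  Multiset.eq_of_mem_replicate (h ▸ Multiset.mem_coe.2 (List.mem_ofFn.2 ⟨i, rfl⟩))

variable {ι R : Type*} [Fintype ι] [AddCommGroup R] [LinearOrder R] [IsOrderedAddMonoid R]
  {c : ι → R}

lemma forall_abs_eq_or_forall_abs_eq_neg (hc : ∑ i, |c i| ≤ |∑ i, c i|) :
    (∀ i, |c i| = c i) ∨ ∀ i, |c i| = -c i := by
  have eq_of_sum_le {d : ι → R} (hle : ∀ i, d i ≤ |c i|) (hd : ∑ i, |c i| ≤ ∑ i, d i) (i : ι) :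
      |c i| = d i :=
    ((Finset.sum_eq_sum_iff_of_le fun i _ => hle i).1
      ((Finset.sum_le_sum fun i _ => hle i).antisymm hd) i (Finset.mem_univ i)).symm
  rcases le_abs'.1 hc with hneg | hpos
  · exact .inr (eq_of_sum_le (fun i => neg_le_abs (c i)) (by
      rwa [Finset.sum_neg_distrib, le_neg]))
  · exact .inl (eq_of_sum_le (fun i => le_abs_self (c i)) hpos)

lemma apply_eq_apply_of_sum_abs_le (hc : ∑ i, |c i| ≤ |∑ i, c i|) {i j : ι}
    (habs : |c i| = |c j|) : c i = c j := by
  rcases forall_abs_eq_or_forall_abs_eq_neg hc with hpos | hneg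
  · rwa [hpos, hpos] at habs
  · rwa [hneg, hneg, neg_inj] at habs

end Exponents

lemma trace_wordEval_eq_aeval {F R : Type} [CommRing F] [CommRing R] [Algebra F R]
    {w : FreeGroup (Fin 2)} {f : MvPolynomial (Fin 3) ℤ} (hf : IsTracePolynomial w f)
    {q : MvPolynomial (Fin 3) F} {h : F[X]}
    (hdec : MvPolynomial.map (Int.castRingHom F) f = aeval q h) (x y : SL2 R) :
    (wordEval w x y).1.trace = aeval (MvPolynomial.aeval (trPoint x y) q) h := by
  rw [hf, aeval_algHom_apply, ← hdec, ← algebraMap_int_eq, ← algebraMap_int_eq,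
    MvPolynomial.aeval_map_algebraMap, MvPolynomial.eval_map, MvPolynomial.aeval_def]

lemma sum_abs_le_of_valuation {F K : Type} {Γ : Type*} [Field F] [Field K] [Algebra F K]
    [LinearOrderedCommGroupWithZero Γ] (v : Valuation K Γ) [v.IsTrivialOn F] {p : Kˣ}
    (hp : 1 < v p) {r : ℕ} (hr : 0 < r) {a b : Fin r → ℤ} (hab : ∀ i, a i ≠ 0 ∧ b i ≠ 0)
    {f : MvPolynomial (Fin 3) ℤ} (hf : IsTracePolynomial (wordOf a b) f)
    {q : MvPolynomial (Fin 3) F} {h : F[X]} (hh : h.natDegree = r)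
    (hdec : MvPolynomial.map (Int.castRingHom F) f = aeval q h) :
    ∑ i, |a i| + ∑ i, |b i| ≤ |∑ i, a i| + |∑ i, b i| := by
  subst hh
  obtain ⟨Q, hQ⟩ : ∃ Q : K[X], torusTrace (wordOf a b) p = aeval Q h :=
    ⟨_, trace_wordEval_eq_aeval hf hdec _ _⟩
  have valuation_coeff : v ((torusTrace (wordOf a b) p).coeff h.natDegree) =
      v p ^ (∑ i, |a i| + ∑ i, |b i|) := valuation_coeff_torusTrace_wordOf v hp hr hab
  have one_lt_coeff : 1 < v ((torusTrace (wordOf a b) p).coeff h.natDegree) := by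
    rw [valuation_coeff]
    have ha : 0 < ∑ i, |a i| := Finset.sum_pos (fun i _ => abs_pos.2 (hab i).1) ⟨⟨0, hr⟩, by simp⟩
    exact one_lt_zpow₀ hp (add_pos_of_pos_of_nonneg ha (Finset.sum_nonneg fun i _ => abs_nonneg _))
  have hmax := valuation_coeff_le_max_of_aeval v hr (hQ ▸ natDegree_torusTrace_wordOf_le a b p)
    (hQ ▸ one_lt_coeff)
  rw [← hQ, valuation_coeff, eval_zero_torusTrace_wordOf, eval_one_torusTrace_wordOf] at hmax
  rw [← zpow_le_zpow_iff_right₀ hp]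
  refine hmax.trans (max_le ?_ ?_) <;>
    refine (valuation_zpow_add_zpow_neg_le v hp _).trans (zpow_le_zpow_right₀ hp.le ?_)
  · exact abs_add_le _ _
  · exact abs_sub _ _

lemma natDegree_dickson {R : Type*} [CommRing R] [Nontrivial R] (k : ℕ) (a : R) :
    ∀ n, (dickson k a n).natDegree = n
  | 0 => by
    rw [dickson_zero]
    exact_mod_cast natDegree_intCast (3 - k : ℤ)
  | 1 => by rw [dickson_one, natDegree_X]
  | n + 2 => by
    have hX : (X * dickson k a (n + 1)).natDegree = n + 2 := by
      rw [natDegree_X_mul (ne_zero_of_natDegree_gt (n := n) (by rw [natDegree_dickson]; omega)),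
        natDegree_dickson]
    have hC : (C a * dickson k a n).natDegree < n + 2 :=
      ((natDegree_C_mul_le _ _).trans_eq (natDegree_dickson k a n)).trans_lt (by omega)
    rw [dickson_add_two, natDegree_sub_eq_left_of_natDegree_lt (hC.trans_eq hX.symm), hX]

theorem word_eq_power_of_trace_similar_general {r : ℕ} (hr : 0 < r)
    (a b : Fin r → ℤ) (hab : ∀ i, a i ≠ 0 ∧ b i ≠ 0)
    (F : Type) [Field F]
    (f : MvPolynomial (Fin 3) ℤ) (hf : IsTracePolynomial (wordOf a b) f)
    (q : MvPolynomial (Fin 3) F) (h : F[X]) (hh : h.natDegree = r)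
    (hdec : MvPolynomial.map (Int.castRingHom F) f = aeval q h)
    (hsim : (↑(List.ofFn fun i => |a i|) : Multiset ℤ) = Multiset.replicate r |a ⟨0, hr⟩| ∧
            (↑(List.ofFn fun i => |b i|) : Multiset ℤ) = Multiset.replicate r |b ⟨0, hr⟩|) :
    ∀ i, a i = a ⟨0, hr⟩ ∧ b i = b ⟨0, hr⟩ := by
  classical
  have hsum := sum_abs_le_of_valuation (RatFunc.inftyValuation F)
    (p := Units.mk0 RatFunc.X RatFunc.X_ne_zero) (by simp [← WithZero.exp_zero]) hr hab hf hh hdec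
  have ha : |∑ i, a i| ≤ ∑ i, |a i| := Finset.abs_sum_le_sum_abs _ _
  have hb : |∑ i, b i| ≤ ∑ i, |b i| := Finset.abs_sum_le_sum_abs _ _
  exact fun i =>
    ⟨apply_eq_apply_of_sum_abs_le (by linarith) (apply_eq_of_coe_ofFn_eq_replicate hsim.1 i),
      apply_eq_apply_of_sum_abs_le (by linarith) (apply_eq_of_coe_ofFn_eq_replicate hsim.2 i)⟩

theorem word_eq_power_of_trace_similar {r : ℕ} (hr : 0 < r)
    (a b : Fin r → ℤ) (hab : ∀ i, a i ≠ 0 ∧ b i ≠ 0)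
    (F : Type) [Field F]
    (hF : Nonempty (F ≃+* ℚ) ∨
      ∃ p : ℕ, p.Prime ∧ Nonempty (F ≃+* ZMod p) ∧ r < 2 * p ∧ p ≠ r)
    (f : MvPolynomial (Fin 3) ℤ) (hf : IsTracePolynomial (wordOf a b) f)
    (q : MvPolynomial (Fin 3) F)
    (hdec : MvPolynomial.map (Int.castRingHom F) f =
      Polynomial.aeval q (Polynomial.dickson 1 (1 : F) r))
    (hsim : (↑(List.ofFn fun i => |a i|) : Multiset ℤ) = Multiset.replicate r |a ⟨0, hr⟩| ∧
            (↑(List.ofFn fun i => |b i|) : Multiset ℤ) = Multiset.replicate r |b ⟨0, hr⟩|) :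
    ∀ i, a i = a ⟨0, hr⟩ ∧ b i = b ⟨0, hr⟩ :=
  word_eq_power_of_trace_similar_general hr a b hab F f hf q _ (natDegree_dickson 1 1 r) hdec hsim
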